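/- For the dimension vector d = (1,1,1,1,1,1,1) with t = 7 and the triple a = (2,3,2), the Borel subgroup B of upper-triangular matrices in GL_7(k) acts on the Lie algebra q_u of the unipotent radical of the parabolic subgroup Q = P(2,3,2) (stabilizer of the flag 0 ⊆ k^2 ⊆ k^5 ⊆ k^7) with infinitely many orbits. In fact, dim B/Q_u = dim q_u/q_u' where q_u' is the derived subalgebra, and since scalar matrices act trivially there is no dense orbit of B/Q_u on q_u/q_u'. -/

import Mathlib

/-- the Q-block (0, 1 or 2) of an index `0 ≤ i < 7` for the parabolic `Q = P(2,3,2)` of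
`GL₇` (0-based indexing: the flag jumps are at `2` and `5`). -/
def qb0 (i : ℕ) : ℕ := if i < 2 then 0 else if i < 5 then 1 else 2

/-- the Borel subgroup `B` of invertible upper-triangular `7 × 7` matrices. -/
def B0 (k : Type*) [Field k] : Set (Matrix (Fin 7) (Fin 7) k) :=
  {g | (∃ g', g * g' = 1 ∧ g' * g = 1) ∧ ∀ i j : Fin 7, (j : ℕ) < (i : ℕ) → g i j = 0}

/-- the Lie algebra `q_u` of the unipotent radical of `Q = P(2,3,2)`: matrices supported on
the strictly super-diagonal `Q`-blocks. -/
def qu0 (k : Type*) [Field k] : Set (Matrix (Fin 7) (Fin 7) k) :=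
  {X | ∀ i j : Fin 7, ¬ qb0 i < qb0 j → X i j = 0}

/-- the set of orbits of the adjoint (conjugation) action of `B` on `q_u`. -/
def orbits0 (k : Type*) [Field k] : Set (Set (Matrix (Fin 7) (Fin 7) k)) :=
  {O | ∃ X ∈ qu0 k, O =
    {Y | ∃ g h, g ∈ B0 k ∧ g * h = 1 ∧ h * g = 1 ∧ Y = g * X * h}}

/-- the Zariski topology on `7 × 7` matrices over `k`. -/
noncomputable def zariskiMat (k : Type*) [Field k] : TopologicalSpace (Matrix (Fin 7) (Fin 7) k) :=
  TopologicalSpace.induced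
    (fun X => (⟨RingHom.ker (MvPolynomial.eval fun p : Fin 7 × Fin 7 => X p.1 p.2),
      RingHom.ker_isPrime _⟩ : PrimeSpectrum (MvPolynomial (Fin 7 × Fin 7) k)))
    inferInstance

/-- the projection killing the `(1,3)` block, modelling `q_u → q_u/q_u'`. -/
def proj0 (k : Type*) [Field k] (X : Matrix (Fin 7) (Fin 7) k) : Matrix (Fin 7) (Fin 7) k :=
  fun i j => if qb0 i = 0 ∧ qb0 j = 2 then 0 else X i j

/-!
Conjugation by an upper-triangular matrix rescales every minor in a lower-left corner of the support
of `X` by a character of `B`, and the same holds for `X * X`. Write `A` (`2 × 3`) and `C` (`3 × 2`)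
for the blocks of `X ∈ q_u` outside `q_u'`; then `A * C` is the only nonzero block of `X * X`. The
corner minors of sizes 1 and 2 of `A`, `C` and `A * C` are six semi-invariants whose weights satisfy
one multiplicative relation, so they combine into two polynomials `modulusNum` and `modulusDen` of
the same weight, neither of which involves the block of `q_u'`. Their ratio is a nonconstant
rational invariant of the action on `q_u / q_u'`: it takes every value of `k`, so there are
infinitely many orbits, and every orbit lies in a proper closed subset cut out by a linear relation
between the two polynomials.
-/

open Matrix Set Topology

section UpperTriangular

variable {n R α : Type*} [Fintype n] {A B : Matrix n n R}

theorem blockTriangular_of_mul_eq_one [DecidableEq n] [CommRing R] [LinearOrder α]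
    {b : n → α} (hA : A.BlockTriangular b) (hAB : A * B = 1) : B.BlockTriangular b := by
  have : Invertible A := invertibleOfRightInverse A B hAB
  exact inv_eq_right_inv hAB ▸ blockTriangular_inv_of_blockTriangular hA

theorem diag_mul_of_isUpperTriangular [NonUnitalNonAssocSemiring R] [LinearOrder n]
    (hA : A.IsUpperTriangular) (hB : B.IsUpperTriangular) (i : n) :
    (A * B) i i = A i i * B i i := by
  rw [Matrix.mul_apply, Finset.sum_eq_single_of_mem i (Finset.mem_univ i)]
  intro a _ hai
  rcases hai.lt_or_gt with hlt | hgt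
  · rw [hA hlt, zero_mul]
  · rw [hB hgt, mul_zero]

theorem conj_mul_conj [DecidableEq n] [Semiring R] {g h : Matrix n n R} (hhg : h * g = 1) :
    g * A * h * (g * B * h) = g * (A * B) * h := by
  calc g * A * h * (g * B * h) = g * A * (h * g) * B * h := by simp only [Matrix.mul_assoc]
    _ = g * (A * B) * h := by rw [hhg, Matrix.mul_one, Matrix.mul_assoc g A B]

end UpperTriangular

section CornerMinor

variable {m n l ι κ R : Type*}

theorem submatrix_mul_of_injective [Fintype n] [Fintype κ] [NonUnitalNonAssocSemiring R]
    (A : Matrix m n R) (B : Matrix n l R) (r : ι → m) (c : ι → l) {e : κ → n}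
    (he : e.Injective) (hzero : ∀ i j, ∀ a ∉ range e, A (r i) a * B a (c j) = 0) :
    (A * B).submatrix r c = A.submatrix r e * B.submatrix e c := by
  ext i j
  simp only [submatrix_apply, Matrix.mul_apply]
  exact (Fintype.sum_of_injective e he _ _ (hzero i j) fun _ => rfl).symm

/-- The minor of `M` on the rows `r` and the columns `c` is a *corner minor* if its entries are the
only possibly nonzero ones in the lower-left region of `M` that it spans. Such minors are
semi-invariant under upper-triangular matrices acting on both sides. -/
def IsCornerMinor [LE m] [LE n] [Zero R] (M : Matrix m n R) (r : ι → m) (c : ι → n) : Prop :=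
  ∀ ⦃i j a b⦄, r i ≤ a → b ≤ c j → a ∉ range r ∨ b ∉ range c → M a b = 0

variable [Fintype m] [Fintype n] [LinearOrder m] [LinearOrder n] [Fintype ι]
  {g : Matrix m m R} {M : Matrix m n R} {h : Matrix n n R} {r : ι → m} {c : ι → n}

theorem IsCornerMinor.submatrix_mul_mul [NonUnitalNonAssocSemiring R] (hM : IsCornerMinor M r c)
    (hg : g.IsUpperTriangular) (hh : h.IsUpperTriangular) (hr : r.Injective) (hc : c.Injective) :
    (g * M * h).submatrix r c = g.submatrix r r * M.submatrix r c * h.submatrix c c := by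
  rw [submatrix_mul_of_injective (g * M) h r c hc, submatrix_mul_of_injective g M r c hr]
  · intro i j a ha
    rcases lt_or_ge a (r i) with hlt | hle
    · rw [hg hlt, zero_mul]
    · rw [hM hle le_rfl (.inl ha), mul_zero]
  · intro i j b hb
    rcases lt_or_ge (c j) b with hlt | hle
    · rw [hh hlt, mul_zero]
    · rw [Matrix.mul_apply, Finset.sum_eq_zero, zero_mul]
      intro a _
      rcases lt_or_ge a (r i) with hlt | hle'
      · rw [hg hlt, zero_mul]
      · rw [hM hle' hle (.inr hb), mul_zero]

theorem IsCornerMinor.det_submatrix_mul_mul [LinearOrder ι] [CommRing R]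
    (hM : IsCornerMinor M r c) (hg : g.IsUpperTriangular) (hh : h.IsUpperTriangular)
    (hr : StrictMono r) (hc : StrictMono c) :
    ((g * M * h).submatrix r c).det =
      (∏ i, g (r i) (r i)) * (M.submatrix r c).det * ∏ i, h (c i) (c i) := by
  have hg' : (g.submatrix r r).IsUpperTriangular := fun _ _ hij => hg (hr hij)
  have hh' : (h.submatrix c c).IsUpperTriangular := fun _ _ hij => hh (hc hij)
  rw [hM.submatrix_mul_mul hg hh hr.injective hc.injective, det_mul, det_mul,
    det_of_isUpperTriangular hg', det_of_isUpperTriangular hh']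
  rfl

end CornerMinor

section RaisesBlocks

variable {n R : Type*} {b : n → ℕ} {s t : ℕ} {M N : Matrix n n R}

/-- `M` is supported on the entries that lie at least `s` blocks above the diagonal ones, where
`b` assigns to each index its block. For `s = 0, 1, 2` and `b = qBlock` these are the Lie algebra of
`Q`, `q_u` and `q_u'`. -/
def RaisesBlocks [Zero R] (b : n → ℕ) (s : ℕ) (M : Matrix n n R) : Prop :=
  ∀ ⦃i j⦄, b j < b i + s → M i j = 0

theorem RaisesBlocks.mul [Fintype n] [NonUnitalNonAssocSemiring R] (hM : RaisesBlocks b s M)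
    (hN : RaisesBlocks b t N) : RaisesBlocks b (s + t) (M * N) := by
  intro i j hij
  rw [Matrix.mul_apply]
  refine Finset.sum_eq_zero fun a _ => ?_
  rcases lt_or_ge (b a) (b i + s) with hlt | hle
  · rw [hM hlt, zero_mul]
  · rw [hN (by omega), mul_zero]

theorem raisesBlocks_zero_of_isUpperTriangular [LinearOrder n] [Zero R] (hb : Monotone b)
    (hM : M.IsUpperTriangular) : RaisesBlocks b 0 M :=
  fun _ _ hij => hM (hb.reflect_lt hij)

theorem RaisesBlocks.isCornerMinor {ι : Type*} [LE n] [Zero R] (hM : RaisesBlocks b s M)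
    {r c : ι → n}
    (hrc : ∀ i j x y, r i ≤ x → y ≤ c j → x ∉ range r ∨ y ∉ range c → b y < b x + s) :
    IsCornerMinor M r c :=
  fun i j x y hx hy hxy => hM (hrc i j x y hx hy hxy)

end RaisesBlocks

/-- The `Q`-block of an index of a `7 × 7` matrix: `qb0` with its domain restricted to `Fin 7`, to
serve as the block function of `RaisesBlocks`. -/
def qBlock (i : Fin 7) : ℕ := qb0 i

theorem qBlock_monotone : Monotone qBlock := by
  decide

section Modulus

variable {R S : Type*} [CommRing R] [CommRing S]

/-- The numerator of the modulus of an orbit: a product of corner minors of the blocks `A`, `C` of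
`X ∈ q_u` and of their product `A * C`, of the same weight as `modulusDen`. -/
def modulusNum (X : Matrix (Fin 7) (Fin 7) R) : R :=
  (X.submatrix ![0, 1] ![2, 3]).det * (X.submatrix ![3, 4] ![5, 6]).det *
    ((X * X).submatrix ![1] ![5]).det

/-- The denominator of the modulus of an orbit: the product of the corner minors of complementary
sizes of the blocks `A`, `C` of `X ∈ q_u` and of their product `A * C`. -/
def modulusDen (X : Matrix (Fin 7) (Fin 7) R) : R :=
  (X.submatrix ![1] ![2]).det * (X.submatrix ![4] ![5]).det *
    ((X * X).submatrix ![0, 1] ![5, 6]).det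

theorem modulusNum_mapMatrix (f : R →+* S) (X : Matrix (Fin 7) (Fin 7) R) :
    modulusNum (f.mapMatrix X) = f (modulusNum X) := by
  simp only [modulusNum, map_mul, RingHom.map_det, RingHom.mapMatrix_apply, submatrix_map,
    ← Matrix.map_mul]

theorem modulusDen_mapMatrix (f : R →+* S) (X : Matrix (Fin 7) (Fin 7) R) :
    modulusDen (f.mapMatrix X) = f (modulusDen X) := by
  simp only [modulusDen, map_mul, RingHom.map_det, RingHom.mapMatrix_apply, submatrix_map,
    ← Matrix.map_mul]

/-- The common weight of `modulusNum` and `modulusDen`: the factor by which `X ↦ g * X * h` with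
`h` the inverse of `g` rescales both of them. -/
def modulusWeight (g h : Matrix (Fin 7) (Fin 7) R) : R :=
  g 0 0 * g 1 1 ^ 2 * g 4 4 * (h 2 2 * h 5 5 ^ 2 * h 6 6)

section Conj

variable {g X h : Matrix (Fin 7) (Fin 7) R}

theorem modulusNum_conj (hX : RaisesBlocks qBlock 1 X) (hg : g.IsUpperTriangular)
    (hgh : g * h = 1) : modulusNum (g * X * h) = modulusWeight g h * modulusNum X := by
  have hh : h.IsUpperTriangular := blockTriangular_of_mul_eq_one hg hgh
  have hXX : RaisesBlocks qBlock 2 (X * X) := hX.mul hX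
  have hA : IsCornerMinor X ![0, 1] ![2, 3] := hX.isCornerMinor (by decide)
  have hC : IsCornerMinor X ![3, 4] ![5, 6] := hX.isCornerMinor (by decide)
  have hAC : IsCornerMinor (X * X) ![1] ![5] := hXX.isCornerMinor (by decide)
  have h33 : g 3 3 * h 3 3 = 1 := by
    rw [← diag_mul_of_isUpperTriangular hg hh, hgh, one_apply_eq]
  rw [modulusNum, conj_mul_conj (mul_eq_one_comm.mp hgh),
    hA.det_submatrix_mul_mul hg hh (by decide) (by decide),
    hC.det_submatrix_mul_mul hg hh (by decide) (by decide),
    hAC.det_submatrix_mul_mul hg hh (by decide) (by decide)]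
  simp only [Fin.prod_univ_two, Fin.prod_univ_one, cons_val_zero, cons_val_one]
  calc _ = modulusWeight g h * modulusNum X * (g 3 3 * h 3 3) := by
        rw [modulusWeight, modulusNum]; ring
    _ = modulusWeight g h * modulusNum X := by rw [h33, mul_one]

theorem modulusDen_conj (hX : RaisesBlocks qBlock 1 X) (hg : g.IsUpperTriangular)
    (hgh : g * h = 1) : modulusDen (g * X * h) = modulusWeight g h * modulusDen X := by
  have hh : h.IsUpperTriangular := blockTriangular_of_mul_eq_one hg hgh
  have hXX : RaisesBlocks qBlock 2 (X * X) := hX.mul hX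
  have hA : IsCornerMinor X ![1] ![2] := hX.isCornerMinor (by decide)
  have hC : IsCornerMinor X ![4] ![5] := hX.isCornerMinor (by decide)
  have hAC : IsCornerMinor (X * X) ![0, 1] ![5, 6] := hXX.isCornerMinor (by decide)
  rw [modulusDen, conj_mul_conj (mul_eq_one_comm.mp hgh),
    hA.det_submatrix_mul_mul hg hh (by decide) (by decide),
    hC.det_submatrix_mul_mul hg hh (by decide) (by decide),
    hAC.det_submatrix_mul_mul hg hh (by decide) (by decide), modulusWeight, modulusDen]
  simp only [Fin.prod_univ_two, Fin.prod_univ_one, cons_val_zero, cons_val_one]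
  ring

end Conj

/-- A curve in `q_u` with vanishing `(1,3)` block that meets every fibre of the modulus: the corner
minors of the blocks `A`, `C` and `A * C` equal `1`, except for the entry `x` of `A * C`. -/
def modulusCurve (x : R) : Matrix (Fin 7) (Fin 7) R :=
  !![0, 0, 0, -1, 1, 0,  0;
     0, 0, 1,  0, 0, 0,  0;
     0, 0, 0,  0, 0, x,  1;
     0, 0, 0,  0, 0, 0, -1;
     0, 0, 0,  0, 0, 1, -1;
     0, 0, 0,  0, 0, 0,  0;
     0, 0, 0,  0, 0, 0,  0]

theorem modulusCurve_raisesBlocks (x : R) : RaisesBlocks qBlock 1 (modulusCurve x) := by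
  intro i j hij
  fin_cases i <;> fin_cases j <;> first | rfl | exact absurd hij (by decide)

theorem modulusCurve_apply_eq_zero (x : R) {i j : Fin 7} (hij : qb0 i = 0 ∧ qb0 j = 2) :
    modulusCurve x i j = 0 := by
  fin_cases i <;> fin_cases j <;> first | rfl | exact absurd hij (by decide)

theorem modulusNum_modulusCurve (x : R) : modulusNum (modulusCurve x) = x := by
  simp only [modulusNum, det_fin_two, det_unique, submatrix_apply]
  simp [modulusCurve, Matrix.mul_apply, Fin.sum_univ_succ]

theorem modulusDen_modulusCurve (x : R) : modulusDen (modulusCurve x) = 1 := by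
  simp only [modulusDen, det_fin_two, det_unique, submatrix_apply]
  simp [modulusCurve, Matrix.mul_apply, Fin.sum_univ_succ]

end Modulus

section Orbits

variable {k : Type*} [Field k] {g h X : Matrix (Fin 7) (Fin 7) k}

theorem qb0_le_two (i : ℕ) : qb0 i ≤ 2 := by
  unfold qb0
  split_ifs <;> decide

theorem mem_qu0_iff : X ∈ qu0 k ↔ RaisesBlocks qBlock 1 X := by
  simp only [qu0, RaisesBlocks, qBlock, mem_ofPred_eq, not_lt, Nat.lt_succ_iff]

theorem isUpperTriangular_of_mem_B0 (hg : g ∈ B0 k) : g.IsUpperTriangular :=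
  fun i j hij => hg.2 i j hij

theorem one_mem_B0 : (1 : Matrix (Fin 7) (Fin 7) k) ∈ B0 k :=
  ⟨⟨1, mul_one 1, mul_one 1⟩, fun _ _ hij => one_apply_ne (Fin.ne_of_gt hij)⟩

theorem conj_mem_qu0 (hX : X ∈ qu0 k) (hg : g ∈ B0 k) (hgh : g * h = 1) :
    g * X * h ∈ qu0 k := by
  have hg' := isUpperTriangular_of_mem_B0 hg
  have hh := blockTriangular_of_mul_eq_one hg' hgh
  rw [mem_qu0_iff] at hX ⊢
  exact ((raisesBlocks_zero_of_isUpperTriangular qBlock_monotone hg').mul hX).mul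
    (raisesBlocks_zero_of_isUpperTriangular qBlock_monotone hh)

theorem proj0_mul_proj0 (hX : X ∈ qu0 k) : proj0 k X * proj0 k X = X * X := by
  ext i j
  simp only [Matrix.mul_apply, proj0]
  refine Finset.sum_congr rfl fun a _ => ?_
  split_ifs with hia haj haj
  · omega
  · have : qb0 j ≤ 2 := qb0_le_two j
    rw [hX a j (by omega), mul_zero, mul_zero]
  · rw [hX i a (by omega), zero_mul, zero_mul]
  · rfl

theorem modulusNum_proj0 (hX : X ∈ qu0 k) : modulusNum (proj0 k X) = modulusNum X := by
  simp only [modulusNum, proj0_mul_proj0 hX, det_fin_two, submatrix_apply]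
  simp [proj0, qb0]

theorem modulusDen_proj0 (hX : X ∈ qu0 k) : modulusDen (proj0 k X) = modulusDen X := by
  simp only [modulusDen, proj0_mul_proj0 hX, det_unique, submatrix_apply]
  simp [proj0, qb0]

/-- The orbit of `X` under conjugation by the Borel subgroup. -/
def borelOrbit (X : Matrix (Fin 7) (Fin 7) k) : Set (Matrix (Fin 7) (Fin 7) k) :=
  {Y | ∃ g h, g ∈ B0 k ∧ g * h = 1 ∧ h * g = 1 ∧ Y = g * X * h}

theorem mem_borelOrbit_self (X : Matrix (Fin 7) (Fin 7) k) : X ∈ borelOrbit X :=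
  ⟨1, 1, one_mem_B0, mul_one 1, mul_one 1, by rw [one_mul, mul_one]⟩

theorem borelOrbit_modulusCurve_injective :
    (fun x : k => borelOrbit (modulusCurve x)).Injective := by
  intro x y (hxy : borelOrbit (modulusCurve x) = borelOrbit (modulusCurve y))
  have hmem : modulusCurve y ∈ borelOrbit (modulusCurve x) := by
    rw [hxy]
    exact mem_borelOrbit_self _
  obtain ⟨g, h, hg, hgh, -, hy⟩ := hmem
  have hg' := isUpperTriangular_of_mem_B0 hg
  have hnum := modulusNum_conj (modulusCurve_raisesBlocks x) hg' hgh
  have hden := modulusDen_conj (modulusCurve_raisesBlocks x) hg' hgh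
  rw [← hy, modulusNum_modulusCurve, modulusNum_modulusCurve] at hnum
  rw [← hy, modulusDen_modulusCurve, modulusDen_modulusCurve, mul_one] at hden
  rw [hnum, ← hden, one_mul]

theorem infinite_orbits0 [Infinite k] : (orbits0 k).Infinite :=
  infinite_of_injective_forall_mem borelOrbit_modulusCurve_injective fun x =>
    ⟨modulusCurve x, mem_qu0_iff.mpr (modulusCurve_raisesBlocks x), rfl⟩

end Orbits

section DenseOrbits

variable {k : Type*} [Field k] {X Y : Matrix (Fin 7) (Fin 7) k}

theorem isClosed_zariskiMat_setOf_eval_eq_zero (F : MvPolynomial (Fin 7 × Fin 7) k) :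
    IsClosed[zariskiMat k] {Y | MvPolynomial.eval (fun p => Y p.1 p.2) F = 0} := by
  rw [zariskiMat, isClosed_induced_iff]
  refine ⟨PrimeSpectrum.zeroLocus {F}, PrimeSpectrum.isClosed_zeroLocus _, ?_⟩
  ext Y
  simp [PrimeSpectrum.mem_zeroLocus, RingHom.mem_ker]

theorem isClosed_zariskiMat_setOf_modulus (α β : k) :
    IsClosed[zariskiMat k] {Y | α * modulusNum Y + β * modulusDen Y = 0} := by
  convert isClosed_zariskiMat_setOf_eval_eq_zero
    (MvPolynomial.C α * modulusNum (mvPolynomialX (Fin 7) (Fin 7) k) +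
      MvPolynomial.C β * modulusDen (mvPolynomialX (Fin 7) (Fin 7) k)) using 4 with Y
  simp only [map_add, map_mul, MvPolynomial.eval_C, ← modulusNum_mapMatrix,
    ← modulusDen_mapMatrix, mvPolynomialX_mapMatrix_eval]

/-- The orbit of the image of `X` under the induced action on `q_u / q_u'`. -/
def projOrbit (X : Matrix (Fin 7) (Fin 7) k) : Set (Matrix (Fin 7) (Fin 7) k) :=
  {Y | ∃ g h, g ∈ B0 k ∧ g * h = 1 ∧ h * g = 1 ∧ Y = proj0 k (g * X * h)}

theorem modulus_relation_of_mem_closure_projOrbit (hX : X ∈ qu0 k) {α β : k}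
    (hαβ : α * modulusNum X + β * modulusDen X = 0) (hY : Y ∈ closure[zariskiMat k] (projOrbit X)) :
    α * modulusNum Y + β * modulusDen Y = 0 := by
  let _ := zariskiMat k
  refine closure_minimal ?_ (isClosed_zariskiMat_setOf_modulus α β) hY
  rintro _ ⟨g, h, hg, hgh, -, rfl⟩
  have hX' := mem_qu0_iff.mp hX
  have hg' := isUpperTriangular_of_mem_B0 hg
  have hgXh := conj_mem_qu0 hX hg hgh
  rw [mem_ofPred_eq, modulusNum_proj0 hgXh, modulusDen_proj0 hgXh,
    modulusNum_conj hX' hg' hgh, modulusDen_conj hX' hg' hgh]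
  linear_combination modulusWeight g h * hαβ

theorem exists_modulusCurve_notMem_closure_projOrbit (hX : X ∈ qu0 k) :
    ∃ x, modulusCurve x ∉ closure[zariskiMat k] (projOrbit X) := by
  by_contra! hmem
  have relation {α β : k} (hαβ : α * modulusNum X + β * modulusDen X = 0) (x : k) :
      α * x + β = 0 := by
    simpa [modulusNum_modulusCurve, modulusDen_modulusCurve] using
      modulus_relation_of_mem_closure_projOrbit hX hαβ (hmem x)
  have proportional (x : k) : modulusDen X * x + -modulusNum X = 0 := relation (by ring) x
  have hnum : modulusNum X = 0 := by linear_combination -proportional 0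
  have hden : modulusDen X = 0 := by linear_combination proportional 1 - proportional 0
  have : (0 : k) * 0 + 1 = 0 := relation (by rw [hnum, hden]; ring) 0
  simp at this

end DenseOrbits

theorem natCard_borel_entries : Nat.card {p : Fin 7 × Fin 7 // (p.1 : ℕ) ≤ (p.2 : ℕ)} = 28 := by
  rw [Nat.card_eq_fintype_card]
  decide +kernel

theorem natCard_qu0_entries : Nat.card {p : Fin 7 × Fin 7 // qb0 p.1 < qb0 p.2} = 16 := by
  rw [Nat.card_eq_fintype_card]
  decide +kernel

theorem natCard_derived_entries :
    Nat.card {p : Fin 7 × Fin 7 // qb0 p.1 = 0 ∧ qb0 p.2 = 2} = 4 := by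
  rw [Nat.card_eq_fintype_card]
  decide +kernel

theorem stmt0_general (k : Type*) [Field k] [Infinite k] :
    (orbits0 k).Infinite ∧
    (Nat.card {p : Fin 7 × Fin 7 // (p.1 : ℕ) ≤ (p.2 : ℕ)} -
        Nat.card {p : Fin 7 × Fin 7 // qb0 p.1 < qb0 p.2} =
      Nat.card {p : Fin 7 × Fin 7 // qb0 p.1 < qb0 p.2} -
        Nat.card {p : Fin 7 × Fin 7 // qb0 p.1 = 0 ∧ qb0 p.2 = 2}) ∧
    ∀ X ∈ qu0 k,
      ¬ ({Y | Y ∈ qu0 k ∧ ∀ i j : Fin 7, qb0 i = 0 ∧ qb0 j = 2 → Y i j = 0} ⊆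
        @closure _ (zariskiMat k)
          {Y | ∃ g h, g ∈ B0 k ∧ g * h = 1 ∧ h * g = 1 ∧ Y = proj0 k (g * X * h)}) := by
  refine ⟨infinite_orbits0, ?_, fun X hX hdense => ?_⟩
  · rw [natCard_borel_entries, natCard_qu0_entries, natCard_derived_entries]
  · obtain ⟨x, hx⟩ := exists_modulusCurve_notMem_closure_projOrbit hX
    exact hx (hdense ⟨mem_qu0_iff.mpr (modulusCurve_raisesBlocks x),
      fun _ _ => modulusCurve_apply_eq_zero x⟩)

/-- For `a = (2,3,2)` and `d = (1,…,1)` the Borel subgroup `B ⊆ GL₇(k)` acts on `q_u` with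
infinitely many orbits; indeed `dim B/Q_u = dim q_u/q_u'` (both equal `12 = 28 − 16 =
16 − 4`), and since the scalar matrices act trivially, no induced `B`-orbit is dense in
`q_u/q_u'` (realized as the matrices of `q_u` with vanishing `(1,3)` block, with its
Zariski topology). -/
theorem stmt0 (k : Type*) [Field k] [IsAlgClosed k] :
    (orbits0 k).Infinite ∧
    (Nat.card {p : Fin 7 × Fin 7 // (p.1 : ℕ) ≤ (p.2 : ℕ)} -
        Nat.card {p : Fin 7 × Fin 7 // qb0 p.1 < qb0 p.2} =
      Nat.card {p : Fin 7 × Fin 7 // qb0 p.1 < qb0 p.2} -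
        Nat.card {p : Fin 7 × Fin 7 // qb0 p.1 = 0 ∧ qb0 p.2 = 2}) ∧
    ∀ X ∈ qu0 k,
      ¬ ({Y | Y ∈ qu0 k ∧ ∀ i j : Fin 7, qb0 i = 0 ∧ qb0 j = 2 → Y i j = 0} ⊆
        @closure _ (zariskiMat k)
          {Y | ∃ g h, g ∈ B0 k ∧ g * h = 1 ∧ h * g = 1 ∧ Y = proj0 k (g * X * h)}) :=
  stmt0_general k
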